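/- arXiv:math/0010292 — 2 statements merged into one kernel-verified Lean document; each statement's English description precedes it below -/
import Mathlib

section
/- Let X and Y be realcompact completely regular Hausdorff topological spaces, let E and F be nonzero normed spaces over 𝕂 with E finite-dimensional, and let T : C_b(X,E) → C_b(Y,F) be a 𝕂-linear biseparating map. If C_b(X,E) and C_b(Y,F) are endowed with the supremum norm, then both T and T⁻¹ are continuous. -/
open Filter Topology BoundedContinuousFunction

/-- A topological space is realcompact if it admits a closed topological embedding
into a product `ℝ^ι` of copies of `ℝ`. -/
def Realcompact (X : Type) [TopologicalSpace X] : Prop :=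
  ∃ (ι : Type) (e : X → ι → ℝ), IsClosedEmbedding e

/-- A map between spaces of bounded continuous vector-valued functions is separating if it
maps pairs of functions with disjoint cozero sets to pairs of functions with disjoint
cozero sets. -/
def SeparatingB {X Y E F : Type} [TopologicalSpace X] [TopologicalSpace Y]
    [NormedAddCommGroup E] [NormedAddCommGroup F] (T : (X →ᵇ E) → (Y →ᵇ F)) : Prop :=
  ∀ f g : X →ᵇ E, (∀ x, ‖f x‖ * ‖g x‖ = 0) → ∀ y, ‖T f y‖ * ‖T g y‖ = 0

/-- Staircase function: continuous, equal to `n` on `[n, n + 2/3]`. -/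
noncomputable def stairS (s : ℝ) : ℝ := s + max (-Int.fract s) (2 * Int.fract s - 2)

lemma stairS_cont : Continuous stairS := by
  unfold stairS
  have h : ContinuousOn (fun t : ℝ => max (-t) (2 * t - 2)) (Set.Icc 0 1) := by fun_prop
  exact continuous_id.add (ContinuousOn.comp_fract'' h (by norm_num))

lemma stairS_eq (s : ℝ) (n : ℤ) (h1 : (n : ℝ) < s) (h2 : s < n + 2 / 3) : stairS s = n := by
  have hf : ⌊s⌋ = n := by
    rw [Int.floor_eq_iff]
    constructor <;> linarith
  have h3 : Int.fract s = s - n := by rw [Int.fract, hf]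
  unfold stairS
  rw [h3, max_eq_left (by linarith)]
  ring

lemma stairS_abs (s : ℝ) (hs : 0 ≤ s) : |stairS s| ≤ s + 1 := by
  have h0 := Int.fract_nonneg s
  have h1 := (Int.fract_lt_one s).le
  unfold stairS
  rw [abs_le]
  constructor
  · have := le_max_left (-Int.fract s) (2 * Int.fract s - 2)
    linarith
  · have : max (-Int.fract s) (2 * Int.fract s - 2) ≤ 0 := max_le (by linarith) (by linarith)
    linarith

lemma stairS_cover (s : ℝ) : ∃ n : ℤ, ((n : ℝ) < s ∧ s < n + 2 / 3) ∨
    ((n : ℝ) < s + 1 / 2 ∧ s + 1 / 2 < n + 2 / 3) := by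
  have h0 := Int.fract_nonneg s
  have h1 := Int.fract_lt_one s
  have h2 : s = ⌊s⌋ + Int.fract s := (Int.floor_add_fract s).symm
  by_cases ha : Int.fract s < 1 / 6
  · exact ⟨⌊s⌋, Or.inr ⟨by linarith, by linarith⟩⟩
  by_cases hb : Int.fract s < 2 / 3
  · exact ⟨⌊s⌋, Or.inl ⟨by linarith, by linarith⟩⟩
  · refine ⟨⌊s⌋ + 1, Or.inr ⟨?_, ?_⟩⟩ <;> push_cast <;> linarith

section helpers

variable {𝕂 X Y E F : Type} [RCLike 𝕂] [TopologicalSpace X] [TopologicalSpace Y]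
    [NormedAddCommGroup E] [NormedSpace 𝕂 E] [NormedAddCommGroup F] [NormedSpace 𝕂 F]

/-- the scalar function `p (‖f x‖)`. -/
noncomputable def radF (𝕂 : Type) [RCLike 𝕂] (f : X →ᵇ E) (p : ℝ → ℝ) (hp : Continuous p) (C : ℝ)
    (hC : ∀ t, 0 ≤ t → |p t| ≤ C) : X →ᵇ 𝕂 :=
  ofNormedAddCommGroup (fun x => ((p ‖f x‖ : ℝ) : 𝕂)) (by fun_prop) C (fun x => by
    rw [RCLike.norm_ofReal]; exact hC _ (norm_nonneg _))

lemma radF_apply (f : X →ᵇ E) (p : ℝ → ℝ) (hp : Continuous p) (C : ℝ)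
    (hC : ∀ t, 0 ≤ t → |p t| ≤ C) (x : X) : radF 𝕂 f p hp C hC x = ((p ‖f x‖ : ℝ) : 𝕂) := rfl

lemma bsmul_apply (φ : X →ᵇ 𝕂) (f : X →ᵇ E) (x : X) : (φ • f) x = φ x • f x := rfl

lemma stairG_bound (c : ℝ) (hc0 : 0 ≤ c) (hc1 : c ≤ 1) (e : E) :
    ‖((stairS (1 / √‖e‖ + c) : ℝ) : 𝕂) • e‖ ≤ √‖e‖ + 2 * ‖e‖ := by
  rw [norm_smul, RCLike.norm_ofReal]
  have h := stairS_abs (1 / √‖e‖ + c) (by positivity)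
  calc |stairS (1 / √‖e‖ + c)| * ‖e‖ ≤ (1 / √‖e‖ + c + 1) * ‖e‖ := by gcongr
    _ ≤ (1 / √‖e‖ + 2) * ‖e‖ := mul_le_mul_of_nonneg_right (by linarith) (norm_nonneg _)
    _ = √‖e‖ + 2 * ‖e‖ := by
      rw [add_mul]; congr 1
      rw [one_div, inv_mul_eq_div, Real.div_sqrt]

lemma stairG_cont (c : ℝ) (hc0 : 0 ≤ c) (hc1 : c ≤ 1) :
    Continuous (fun e : E => ((stairS (1 / √‖e‖ + c) : ℝ) : 𝕂) • e) := by
  rw [continuous_iff_continuousAt]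
  intro e
  by_cases he : e = 0
  · subst he
    unfold ContinuousAt
    beta_reduce
    rw [smul_zero]
    refine squeeze_zero_norm (stairG_bound (𝕂 := 𝕂) c hc0 hc1) ?_
    have : Continuous (fun e : E => √‖e‖ + 2 * ‖e‖) := by fun_prop
    simpa using this.tendsto 0
  · have h0 : √‖e‖ ≠ 0 := by
      rw [Real.sqrt_ne_zero (norm_nonneg _)]; simpa using he
    have h1 : ContinuousAt (fun e : E => 1 / √‖e‖ + c) e := by
      refine ContinuousAt.add (ContinuousAt.div continuousAt_const ?_ h0) continuousAt_const
      exact (by fun_prop : Continuous (fun e : E => √‖e‖)).continuousAt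
    have h2 : ContinuousAt (fun e : E => stairS (1 / √‖e‖ + c)) e :=
      ContinuousAt.comp (g := stairS) stairS_cont.continuousAt h1
    exact (ContinuousAt.comp (g := fun r : ℝ => (r : 𝕂))
      RCLike.continuous_ofReal.continuousAt h2).smul continuousAt_id

/-- the function `stair (1/√‖f‖ + c) • f`. -/
noncomputable def stairG (𝕂 : Type) [RCLike 𝕂] [NormedSpace 𝕂 E] (f : X →ᵇ E) (c : ℝ)
    (hc0 : 0 ≤ c) (hc1 : c ≤ 1) : X →ᵇ E :=
  ofNormedAddCommGroup (fun x => ((stairS (1 / √‖f x‖ + c) : ℝ) : 𝕂) • f x)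
    ((stairG_cont (𝕂 := 𝕂) c hc0 hc1).comp f.continuous) (√‖f‖ + 2 * ‖f‖) (fun x => by
      refine (stairG_bound (𝕂 := 𝕂) c hc0 hc1 (f x)).trans ?_
      have := f.norm_coe_le_norm x
      gcongr)

lemma stairG_local (f : X →ᵇ E) (c : ℝ) (hc0 : 0 ≤ c) (hc1 : c ≤ 1) (x0 : X) (hx : f x0 ≠ 0)
    (n : ℤ) (h1 : (n : ℝ) < 1 / √‖f x0‖ + c) (h2 : 1 / √‖f x0‖ + c < n + 2 / 3) :
    ∃ η > 0, ∀ x, |‖f x‖ - ‖f x0‖| < η → stairG 𝕂 f c hc0 hc1 x = (((n : ℝ) : ℝ) : 𝕂) • f x := by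
  have h0 : √‖f x0‖ ≠ 0 := by
    rw [Real.sqrt_ne_zero (norm_nonneg _)]; simpa using hx
  have hcont : ContinuousAt (fun t : ℝ => 1 / √t + c) ‖f x0‖ :=
    ContinuousAt.add (ContinuousAt.div continuousAt_const
      Real.continuous_sqrt.continuousAt h0) continuousAt_const
  have hev := hcont.eventually (Ioo_mem_nhds h1 h2)
  obtain ⟨η, hη, H⟩ := Metric.eventually_nhds_iff.1 hev
  refine ⟨η, hη, fun x hx => ?_⟩
  have := H (y := ‖f x‖) (by rwa [Real.dist_eq])
  show ((stairS (1 / √‖f x‖ + c) : ℝ) : 𝕂) • f x = _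
  rw [stairS_eq _ n this.1 this.2]

lemma key_local (T : (X →ᵇ E) ≃ₗ[𝕂] (Y →ᵇ F)) (hT : SeparatingB ⇑T) (hT' : SeparatingB ⇑T.symm)
    (f g : X →ᵇ E) (k : Y →ᵇ F) (x0 : X) (hk : T.symm k x0 ≠ 0) (a : 𝕂) (η : ℝ) (hη : 0 < η)
    (H : ∀ x, |‖f x‖ - ‖f x0‖| < η → g x = a • f x) :
    ∃ y, k y ≠ 0 ∧ T g y = a • T f y := by
  let b : X →ᵇ 𝕂 := radF 𝕂 f (fun t => max 0 (min η (η - |t - ‖f x0‖|))) (by fun_prop) η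
    (fun t _ => by
      rw [abs_of_nonneg (le_max_left _ _)]
      exact max_le hη.le (min_le_left _ _))
  let u : X →ᵇ E := b • T.symm k
  have hb0 : b x0 ≠ 0 := by
    simp [b, radF_apply, hη.le, hη.ne']
  by_contra hcon
  push Not at hcon
  -- T u ⊥ k
  have hd : ∀ y, ‖T u y‖ * ‖k y‖ = 0 := by
    intro y
    by_cases hky : k y = 0
    · simp [hky]
    have h1 : T (g - a • f) y ≠ 0 := by
      have := hcon y hky
      simp only [map_sub, map_smul]
      simpa [sub_eq_zero] using this
    have h2 := hT u (g - a • f) (fun x => by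
      by_cases hx : |‖f x‖ - ‖f x0‖| < η
      · simp [H x hx]
      · have : b x = 0 := by
          push Not at hx
          have : max 0 (min η (η - |‖f x‖ - ‖f x0‖|)) = 0 :=
            max_eq_left ((min_le_right _ _).trans (by linarith))
          simp only [b, radF_apply, this, RCLike.ofReal_zero]
        simp [u, bsmul_apply, this]) y
    rcases mul_eq_zero.1 h2 with h | h
    · simp [h]
    · exact absurd (norm_eq_zero.1 h) h1
  have := hT' _ _ hd x0
  rw [T.symm_apply_apply] at this
  simp [u, bsmul_apply, hb0, hk] at this

lemma key_point (T : (X →ᵇ E) ≃ₗ[𝕂] (Y →ᵇ F)) (hT : SeparatingB ⇑T) (hT' : SeparatingB ⇑T.symm)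
    (y : Y) (f : X →ᵇ E)
    (H : ∀ ε > 0, ∀ ψ : X →ᵇ 𝕂, (∀ x, ‖f x‖ < ε → ψ x = 0) → T (ψ • f) y = 0) :
    T f y = 0 := by
  by_contra hne
  have hpos : 0 < ‖T f y‖ := norm_pos_iff.2 hne
  set δ := ‖T f y‖ / 2 with hδ
  have hδ0 : 0 < δ := by positivity
  let g0 := stairG 𝕂 f 0 le_rfl zero_le_one
  let g1 := stairG 𝕂 f (1 / 2) (by norm_num) (by norm_num)
  set M := max ‖T g0‖ ‖T g1‖ with hM
  have hM0 : 0 ≤ M := (norm_nonneg _).trans (le_max_left _ _)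
  set K := M / δ + 1 with hK
  have hK0 : 0 < K := by positivity
  set ε := 1 / K ^ 2 with hε
  have hε0 : 0 < ε := by positivity
  let ψ : X →ᵇ 𝕂 := radF 𝕂 f (fun t => min 1 (max 0 (2 * t / ε - 1))) (by fun_prop) 1
    (fun t _ => by
      rw [abs_of_nonneg (le_min zero_le_one (le_max_left _ _))]
      exact min_le_left _ _)
  let f' := f - ψ • f
  have hf' : T f' y = T f y := by
    have h := H (ε / 2) (by positivity) ψ (fun x hx => by
      have : 2 * ‖f x‖ / ε - 1 ≤ 0 := by
        rw [sub_nonpos, div_le_one hε0]; linarith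
      simp [ψ, radF_apply, max_eq_left this])
    simp [f', h]
  have hf'x : ∀ x, f' x ≠ 0 → f x ≠ 0 ∧ ‖f x‖ < ε := by
    intro x hx
    refine ⟨fun h => hx (by simp [f', bsmul_apply, h]), ?_⟩
    by_contra hge
    push Not at hge
    apply hx
    have : 1 ≤ 2 * ‖f x‖ / ε - 1 := by
      rw [le_sub_iff_add_le, le_div_iff₀ hε0]; linarith
    have h1 : min 1 (max 0 (2 * ‖f x‖ / ε - 1)) = 1 :=
      min_eq_left (this.trans (le_max_right _ _))
    simp only [f', BoundedContinuousFunction.coe_sub, Pi.sub_apply, bsmul_apply, ψ, radF_apply, h1,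
      RCLike.ofReal_one, one_smul, sub_self]
  let β : Y →ᵇ 𝕂 := radF 𝕂 (T f) (fun t => max 0 (min 1 (t - δ))) (by fun_prop) 1
    (fun t _ => by
      rw [abs_of_nonneg (le_max_left _ _)]
      exact max_le zero_le_one (min_le_left _ _))
  let k : Y →ᵇ F := β • T f'
  have hky : k y ≠ 0 := by
    have h1 : 0 < max 0 (min 1 (‖T f y‖ - δ)) := by
      refine lt_max_of_lt_right (lt_min one_pos ?_)
      rw [hδ]; linarith
    show β y • T f' y ≠ 0
    refine smul_ne_zero ?_ (by rw [hf']; exact hne)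
    show ((_ : ℝ) : 𝕂) ≠ 0
    rw [Ne, RCLike.ofReal_eq_zero]
    exact h1.ne'
  have hk : ∀ y', k y' ≠ 0 → δ < ‖T f y'‖ := by
    intro y' h
    by_contra hle
    push Not at hle
    apply h
    have h1 : max 0 (min 1 (‖T f y'‖ - δ)) = 0 :=
      max_eq_left ((min_le_right _ _).trans (by linarith))
    simp only [k, bsmul_apply, β, radF_apply, h1, RCLike.ofReal_zero, zero_smul]
  -- a common point
  obtain ⟨x0, hx0⟩ : ∃ x, ‖f' x‖ * ‖T.symm k x‖ ≠ 0 := by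
    by_contra hcon
    push Not at hcon
    have := hT _ _ hcon y
    rw [T.apply_symm_apply, hf'] at this
    simp [hne, hky] at this
  have hA : f' x0 ≠ 0 := fun h => hx0 (by simp [h])
  have hB : T.symm k x0 ≠ 0 := fun h => hx0 (by simp [h])
  obtain ⟨hfx, hlt⟩ := hf'x x0 hA
  have hs : K < 1 / √‖f x0‖ := by
    have h0 : 0 < √‖f x0‖ := Real.sqrt_pos.2 (norm_pos_iff.2 hfx)
    rw [lt_div_iff₀ h0]
    have : √‖f x0‖ < 1 / K := by
      rw [Real.sqrt_lt' (by positivity)]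
      rwa [div_pow, one_pow]
    calc K * √‖f x0‖ < K * (1 / K) := by gcongr
      _ = 1 := by field_simp
  have fin : ∀ (n : ℤ) (g : X →ᵇ E) (η : ℝ), 0 < η → K - 1 < n → ‖T g‖ ≤ M →
      (∀ x, |‖f x‖ - ‖f x0‖| < η → g x = ((n : ℝ) : 𝕂) • f x) → False := by
    intro n g η hη hn hg hloc
    obtain ⟨y', h1, h2⟩ := key_local T hT hT' f g k x0 hB _ η hη hloc
    have h3 := (T g).norm_coe_le_norm y'
    rw [h2, norm_smul, RCLike.norm_ofReal] at h3
    have h4 := hk y' h1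
    have h5 : M / δ < n := by rw [hK] at hn; linarith
    have h5' : 0 ≤ M / δ := by positivity
    have h6 : M < n * δ := (div_lt_iff₀ hδ0).1 h5
    have h7 : (n : ℝ) * δ ≤ |(n : ℝ)| * ‖T f y'‖ := by
      gcongr
      exact le_abs_self _
    linarith
  obtain ⟨n, h | h⟩ := stairS_cover (1 / √‖f x0‖)
  · obtain ⟨η, hη, hl⟩ := stairG_local (𝕂 := 𝕂) f 0 le_rfl zero_le_one x0 hfx n
      (by linarith) (by linarith)
    exact fin n g0 η hη (by linarith) (le_max_left _ _) hl
  · obtain ⟨η, hη, hl⟩ := stairG_local (𝕂 := 𝕂) f (1 / 2) (by norm_num) (by norm_num) x0 hfx n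
      h.1 h.2
    exact fin n g1 η hη (by linarith) (le_max_right _ _) hl

/-- The support ultrafilter. -/
lemma exists_ultra (T : (X →ᵇ E) ≃ₗ[𝕂] (Y →ᵇ F)) (hT : SeparatingB ⇑T) (y : Y)
    (hy : ∃ f, T f y ≠ 0) :
    ∃ U : Ultrafilter X, ∀ φ : X →ᵇ 𝕂, (∀ f : X →ᵇ E, T (φ • f) y = 0) →
      Tendsto φ U (𝓝 0) := by
  let N := {φ : X →ᵇ 𝕂 // ∀ f : X →ᵇ E, T (φ • f) y = 0}
  let G : N → Filter X := fun φ => comap φ.1 (𝓝 0)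
  have : Nonempty N := ⟨⟨0, fun f => by
    have : (0 : X →ᵇ 𝕂) • f = 0 := by ext x; simp [bsmul_apply]
    simp [this]⟩⟩
  have hne : NeBot (iInf G) := by
    refine iInf_neBot_of_directed' ?_ ?_
    · intro φ₁ φ₂
      refine ⟨⟨star φ₁.1 * φ₁.1 + star φ₂.1 * φ₂.1, fun f => ?_⟩, ?_, ?_⟩
      · have : (star φ₁.1 * φ₁.1 + star φ₂.1 * φ₂.1) • f =
            φ₁.1 • (star φ₁.1 • f) + φ₂.1 • (star φ₂.1 • f) := by
          ext x
          simp [bsmul_apply, add_smul, smul_smul, mul_comm]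
        rw [this, map_add, BoundedContinuousFunction.coe_add, Pi.add_apply, φ₁.2, φ₂.2, add_zero]
      all_goals
        show comap _ _ ≤ comap _ _
        rw [← tendsto_iff_comap]
        rw [tendsto_zero_iff_norm_tendsto_zero]
        refine squeeze_zero (fun _ => norm_nonneg _)
          (g := fun x => √‖(star φ₁.1 * φ₁.1 + star φ₂.1 * φ₂.1) x‖) ?_ ?_
        · intro x
          apply Real.le_sqrt_of_sq_le
          have : (star φ₁.1 * φ₁.1 + star φ₂.1 * φ₂.1) x =
              ((‖φ₁.1 x‖ ^ 2 + ‖φ₂.1 x‖ ^ 2 : ℝ) : 𝕂) := by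
            simp [RCLike.conj_mul]
          rw [this, RCLike.norm_ofReal, abs_of_nonneg (by positivity)]
          nlinarith [sq_nonneg ‖φ₁.1 x‖, sq_nonneg ‖φ₂.1 x‖]
        · have h1 : Tendsto (⇑(star φ₁.1 * φ₁.1 + star φ₂.1 * φ₂.1))
            (comap (⇑(star φ₁.1 * φ₁.1 + star φ₂.1 * φ₂.1)) (𝓝 0)) (𝓝 0) := tendsto_comap
          have h2 : Continuous (fun z : 𝕂 => √‖z‖) := by fun_prop
          have h3 := (h2.tendsto 0).comp h1
          rw [norm_zero, Real.sqrt_zero] at h3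
          exact h3
    · intro φ
      rw [comap_neBot_iff]
      intro s hs
      by_contra hcon
      push Not at hcon
      obtain ⟨ε, hε, hb⟩ := Metric.mem_nhds_iff.1 hs
      have hlow : ∀ x, ε ≤ ‖φ.1 x‖ := by
        intro x
        by_contra hx
        push Not at hx
        exact hcon x (hb (by simpa using hx))
      have hnz : ∀ x, φ.1 x ≠ 0 := fun x h => by
        have := hlow x
        rw [h, norm_zero] at this
        linarith
      obtain ⟨f, hf⟩ := hy
      let ι : X →ᵇ 𝕂 := ofNormedAddCommGroup (fun x => (φ.1 x)⁻¹)
        (φ.1.continuous.inv₀ hnz) (ε⁻¹) (fun x => by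
          rw [norm_inv]
          exact inv_anti₀ hε (hlow x))
      have : f = φ.1 • (ι • f) := by
        ext x
        show f x = φ.1 x • ((φ.1 x)⁻¹ • f x)
        rw [smul_inv_smul₀ (hnz x)]
      rw [this, φ.2] at hf
      exact hf rfl
  refine ⟨Ultrafilter.of (iInf G), fun φ hφ => ?_⟩
  rw [tendsto_iff_comap]
  exact (Ultrafilter.of_le _).trans (iInf_le G ⟨φ, hφ⟩)

lemma ultra_kill (T : (X →ᵇ E) ≃ₗ[𝕂] (Y →ᵇ F)) (hT : SeparatingB ⇑T) (hT' : SeparatingB ⇑T.symm)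
    (y : Y) (U : Ultrafilter X)
    (hU : ∀ φ : X →ᵇ 𝕂, (∀ f : X →ᵇ E, T (φ • f) y = 0) → Tendsto φ U (𝓝 0))
    (f : X →ᵇ E) (hf : Tendsto f U (𝓝 0)) : T f y = 0 := by
  refine key_point T hT hT' y f (fun ε hε ψ hψ => ?_)
  by_contra hne
  let χ : X →ᵇ 𝕂 := radF 𝕂 f (fun t => max 0 (1 - t / ε)) (by fun_prop) 1
    (fun t ht => by
      rw [abs_of_nonneg (le_max_left _ _)]
      refine max_le zero_le_one ?_
      have : 0 ≤ t / ε := by positivity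
      linarith)
  have h1 : Tendsto χ U (𝓝 0) := by
    refine hU χ (fun h => ?_)
    have := hT (χ • h) (ψ • f) (fun x => by
      by_cases hx : ‖f x‖ < ε
      · simp [bsmul_apply, hψ x hx]
      · have h2 : max 0 (1 - ‖f x‖ / ε) = 0 := by
          push Not at hx
          refine max_eq_left ?_
          rw [sub_nonpos, one_le_div hε]; exact hx
        have h3 : χ x = 0 := by simp only [χ, radF_apply, h2, RCLike.ofReal_zero]
        simp [bsmul_apply, h3]) y
    simpa [hne] using this
  have h2 : Tendsto χ U (𝓝 1) := by
    have hc : Continuous (fun e : E => ((max 0 (1 - ‖e‖ / ε) : ℝ) : 𝕂)) := by fun_prop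
    have := (hc.tendsto 0).comp hf
    rw [norm_zero, zero_div, sub_zero, max_eq_right zero_le_one, RCLike.ofReal_one] at this
    exact this
  exact zero_ne_one (tendsto_nhds_unique h1 h2)

lemma eval_const [FiniteDimensional 𝕂 E] [Nontrivial F]
    (T : (X →ᵇ E) ≃ₗ[𝕂] (Y →ᵇ F)) (hT : SeparatingB ⇑T) (hT' : SeparatingB ⇑T.symm) (y : Y) :
    ∀ f : X →ᵇ E,
      ∃ e : E, ‖e‖ ≤ ‖f‖ ∧ T f y = T (BoundedContinuousFunction.const X e) y := by
  have hy : ∃ f, T f y ≠ 0 := by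
    obtain ⟨v, hv⟩ := exists_ne (0 : F)
    exact ⟨T.symm (BoundedContinuousFunction.const Y v), by simpa using hv⟩
  obtain ⟨U, hU⟩ := exists_ultra T hT y hy
  intro f
  have : ProperSpace E := FiniteDimensional.proper 𝕂 E
  have hc : IsCompact (Metric.closedBall (0 : E) ‖f‖) := isCompact_closedBall _ _
  obtain ⟨e, he, hlim⟩ := hc.ultrafilter_le_nhds (U.map f) (by
    rw [le_principal_iff]
    refine Filter.mem_map.2 (Filter.Eventually.of_forall (fun x => ?_))
    simpa using f.norm_coe_le_norm x)
  refine ⟨e, by simpa using he, ?_⟩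
  have h0 := ultra_kill T hT hT' y U hU (f - BoundedContinuousFunction.const X e) (by
    have h1 : Tendsto f U (𝓝 e) := hlim
    have h2 := h1.sub_const e
    rw [sub_self] at h2
    exact h2)
  rw [map_sub] at h0
  simpa [sub_eq_zero] using h0

end helpers

/-- `X →ᵇ E` and `Y →ᵇ F` carry the supremum norm (the default norm in Mathlib); a linear
biseparating map between them, with `E` finite-dimensional, is continuous with continuous
inverse. -/
theorem stmt9 {𝕂 X Y E F : Type} [RCLike 𝕂]
    [TopologicalSpace X] [CompletelyRegularSpace X] [T2Space X]
    [TopologicalSpace Y] [CompletelyRegularSpace Y] [T2Space Y]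
    [NormedAddCommGroup E] [NormedSpace 𝕂 E] [Nontrivial E] [FiniteDimensional 𝕂 E]
    [NormedAddCommGroup F] [NormedSpace 𝕂 F] [Nontrivial F]
    (hX : Realcompact X) (hY : Realcompact Y)
    (T : (X →ᵇ E) ≃ₗ[𝕂] (Y →ᵇ F)) (hT : SeparatingB ⇑T) (hT' : SeparatingB ⇑T.symm) :
    Continuous ⇑T ∧ Continuous ⇑T.symm := by
  classical
  have hec : ∀ y : Y, ∀ f : X →ᵇ E,
      ∃ e : E, ‖e‖ ≤ ‖f‖ ∧ T f y = T (BoundedContinuousFunction.const X e) y :=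
    fun y => eval_const T hT hT' y
  let cst : E →ₗ[𝕂] (X →ᵇ E) :=
    { toFun := BoundedContinuousFunction.const X
      map_add' := fun _ _ => rfl
      map_smul' := fun _ _ => rfl }
  let ev : Y → (Y →ᵇ F) →ₗ[𝕂] F := fun y =>
    { toFun := fun f => f y
      map_add' := fun _ _ => rfl
      map_smul' := fun _ _ => rfl }
  let J : Y → E →ₗ[𝕂] F := fun y => (ev y).comp (T.toLinearMap.comp cst)
  have hJ : ∀ y f, ∃ e : E, ‖e‖ ≤ ‖f‖ ∧ T f y = J y e := hec
  rcases isEmpty_or_nonempty Y with hYe | ⟨⟨y0⟩⟩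
  · have : Subsingleton (Y →ᵇ F) := ⟨fun a b => by ext y; exact hYe.elim y⟩
    have : Subsingleton (X →ᵇ E) := T.toEquiv.subsingleton
    exact ⟨continuous_of_const fun _ _ => Subsingleton.elim _ _,
      continuous_of_const fun _ _ => Subsingleton.elim _ _⟩
  have : FiniteDimensional 𝕂 F := by
    refine Module.Finite.of_surjective (J y0) (fun v => ?_)
    obtain ⟨e, -, he⟩ := hJ y0 (T.symm (BoundedContinuousFunction.const Y v))
    exact ⟨e, by rw [← he]; simp⟩
  have : CompleteSpace E := FiniteDimensional.complete 𝕂 E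
  have : CompleteSpace F := FiniteDimensional.complete 𝕂 F
  let L : Y → (X →ᵇ E) →L[𝕂] F := fun y =>
    ((ev y).comp T.toLinearMap).mkContinuous ‖(J y).toContinuousLinearMap‖ (fun f => by
      obtain ⟨e, h1, h2⟩ := hJ y f
      show ‖T f y‖ ≤ _
      rw [h2]
      exact ((J y).toContinuousLinearMap.le_opNorm e).trans (by gcongr))
  have hL : ∀ y f, L y f = T f y := fun _ _ => rfl
  obtain ⟨C, hC⟩ := banach_steinhaus (g := L) (fun f => ⟨‖T f‖, fun y => by
    rw [hL]; exact (T f).norm_coe_le_norm y⟩)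
  have hC0 : 0 ≤ C := (norm_nonneg _).trans (hC y0)
  have hTc : Continuous T := by
    refine (T.toLinearMap.mkContinuous C (fun f => ?_)).continuous
    refine (BoundedContinuousFunction.norm_le (by positivity)).2 (fun y => ?_)
    exact ((L y).le_opNorm f).trans (by gcongr; exact hC y)
  exact ⟨hTc, T.continuous_symm hTc⟩
end

section
/- Let X and Y be realcompact completely regular Hausdorff topological spaces, let E and F be infinite-dimensional normed spaces over 𝕂, and let T : C_b(X,E) → C_b(Y,F) be a continuous 𝕂-linear biseparating map. For each y ∈ Y define J_y : E → F by J_y(e) = (T ê)(y). Then each J_y is a continuous 𝕂-linear bijection from E onto F with ‖J_y(e)‖ ≤ ‖T‖·‖e‖ for all e ∈ E, and the map y ↦ J_y is continuous from Y into the space of continuous linear bijections from E onto F endowed with the strong operator topology. -/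
open Filter Topology BoundedContinuousFunction

/-- Plateau function. -/
noncomputable def tauP (r : ℝ) : ℝ := min 1 (2 * |Real.sin (Real.pi * r)|)

noncomputable def stair {V : Type} [NormedAddCommGroup V] [NormedSpace ℝ V] (u : ℕ → V) (r : ℝ) : V :=
  tauP r • u ⌊r⌋₊

def Plat (r : ℝ) : Prop := 1 / 2 < |Real.sin (Real.pi * r)|

theorem tauP_cont : Continuous tauP := by unfold tauP; fun_prop
theorem tauP_nonneg (r : ℝ) : 0 ≤ tauP r := by unfold tauP; positivity
theorem tauP_le (r : ℝ) : tauP r ≤ 1 := min_le_left _ _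

theorem plat_or (r : ℝ) : Plat r ∨ Plat (r + 1 / 2) := by
  unfold Plat
  have h1 : Real.sin (Real.pi * (r + 1/2)) = Real.cos (Real.pi * r) := by
    rw [← Real.sin_add_pi_div_two]; ring_nf
  rw [h1]
  by_contra! h
  have := Real.sin_sq_add_cos_sq (Real.pi * r)
  rw [← sq_abs, ← sq_abs (Real.cos _)] at this
  nlinarith [h.1, h.2, abs_nonneg (Real.sin (Real.pi * r)), abs_nonneg (Real.cos (Real.pi * r))]

theorem floor_loc (r : ℝ) (h : Real.sin (Real.pi * r) ≠ 0) : ∀ᶠ s in 𝓝 r, ⌊s⌋₊ = ⌊r⌋₊ := by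
  rcases lt_trichotomy r 0 with h0 | h0 | h0
  · filter_upwards [Iio_mem_nhds h0] with s hs
    rw [Nat.floor_of_nonpos h0.le, Nat.floor_of_nonpos (le_of_lt hs)]
  · simp [h0] at h
  · have h1 : (⌊r⌋₊ : ℝ) < r := by
      refine lt_of_le_of_ne (Nat.floor_le h0.le) fun he => h ?_
      rw [← he, mul_comm]; exact Real.sin_nat_mul_pi _
    have h2 := Nat.lt_floor_add_one r
    filter_upwards [Ioo_mem_nhds h1 h2] with s hs
    rw [Nat.floor_eq_iff (by have := hs.1; have : (0:ℝ) ≤ ⌊r⌋₊ := by positivity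
                             linarith [hs.1])]
    exact ⟨hs.1.le, hs.2⟩

section
variable {V : Type} [NormedAddCommGroup V] [NormedSpace ℝ V] (u : ℕ → V)

theorem stair_norm (r : ℝ) : ‖stair u r‖ ≤ ‖u ⌊r⌋₊‖ := by
  unfold stair
  rw [norm_smul, Real.norm_of_nonneg (tauP_nonneg r)]
  exact mul_le_of_le_one_left (norm_nonneg _) (tauP_le r)

theorem stair_cont : Continuous (stair u) := by
  rw [continuous_iff_continuousAt]
  intro r
  by_cases h : Real.sin (Real.pi * r) = 0
  · have h0 : tauP r = 0 := by simp [tauP, h]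
    have h1 : stair u r = 0 := by simp [stair, h0]
    unfold ContinuousAt
    rw [h1]
    have h2 : Tendsto (fun s => tauP s * ∑ i ∈ Finset.range (⌊r + 1⌋₊ + 1), ‖u i‖) (𝓝 r) (𝓝 0) := by
      have := (tauP_cont.tendsto r).mul_const (∑ i ∈ Finset.range (⌊r + 1⌋₊ + 1), ‖u i‖)
      rwa [h0, zero_mul] at this
    refine squeeze_zero_norm' ?_ h2
    filter_upwards [Iio_mem_nhds (show r < r + 1 by linarith)] with s hs
    unfold stair
    rw [norm_smul, Real.norm_of_nonneg (tauP_nonneg s)]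
    refine mul_le_mul_of_nonneg_left ?_ (tauP_nonneg s)
    refine Finset.single_le_sum (f := fun i => ‖u i‖) (fun i _ => norm_nonneg _) ?_
    rw [Finset.mem_range, Nat.lt_succ_iff]
    exact Nat.floor_le_floor (le_of_lt hs)
  · have : ContinuousAt (fun s => tauP s • u ⌊r⌋₊) r := by
      have := tauP_cont.continuousAt (x := r)
      fun_prop
    refine this.congr ?_
    filter_upwards [floor_loc r h] with s hs
    simp [stair, hs]

theorem stair_plat {r : ℝ} (h : Plat r) : stair u r = u ⌊r⌋₊ := by
  unfold Plat at h
  have : tauP r = 1 := by unfold tauP; exact min_eq_left (by linarith)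
  simp [stair, this]

theorem stair_loc {r : ℝ} (h : Plat r) : ∀ᶠ s in 𝓝 r, stair u s = u ⌊r⌋₊ := by
  have hc : Continuous fun s => |Real.sin (Real.pi * s)| := by fun_prop
  have h1 : ∀ᶠ s in 𝓝 r, Plat s := hc.continuousAt.eventually (lt_mem_nhds h)
  have h2 : Real.sin (Real.pi * r) ≠ 0 := by
    intro h0; unfold Plat at h; rw [h0] at h; norm_num at h
  filter_upwards [h1, floor_loc r h2] with s hs hs'
  rw [stair_plat u hs, hs']
end

noncomputable def rst {X : Type} [TopologicalSpace X] (φ : C(StoneCech X, ℝ)) : X →ᵇ ℝ :=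
  (BoundedContinuousFunction.mkOfCompact φ).compContinuous ⟨stoneCechUnit, continuous_stoneCechUnit⟩

/-- Multiplication of a vector valued function by a scalar function. -/
noncomputable def bm {X E : Type} [TopologicalSpace X] [NormedAddCommGroup E] [NormedSpace ℝ E]
    (φ : X →ᵇ ℝ) (f : X →ᵇ E) : X →ᵇ E :=
  BoundedContinuousFunction.ofNormedAddCommGroup (fun x => φ x • f x)
    (φ.continuous.smul f.continuous) (‖φ‖ * ‖f‖) fun x => by
      rw [norm_smul]
      exact mul_le_mul (φ.norm_coe_le_norm x) (f.norm_coe_le_norm x) (norm_nonneg _) (norm_nonneg _)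

def Loc {X Y E F : Type} [TopologicalSpace X] [TopologicalSpace Y]
    [NormedAddCommGroup E] [NormedAddCommGroup F] (T : (X →ᵇ E) → (Y →ᵇ F)) (y : Y)
    (p : StoneCech X) : Prop :=
  ∀ U ∈ 𝓝 p, ∀ f : X →ᵇ E, (∀ x, stoneCechUnit x ∈ U → f x = 0) → T f y = 0

section
variable {X Y E F : Type} [TopologicalSpace X] [TopologicalSpace Y]
  [NormedAddCommGroup E] [NormedSpace ℝ E] [NormedAddCommGroup F] [NormedSpace ℝ F]

@[simp] theorem rst_apply (φ : C(StoneCech X, ℝ)) (x : X) : rst φ x = φ (stoneCechUnit x) := rfl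
@[simp] theorem bm_apply (φ : X →ᵇ ℝ) (f : X →ᵇ E) (x : X) : bm φ f x = φ x • f x := rfl

theorem exists_loc (T : (X →ᵇ E) →L[ℝ] (Y →ᵇ F)) (hT : SeparatingB ⇑T) (y : Y)
    (hs : ∃ f, T f y ≠ 0) : ∃ p, Loc T y p := by
  by_contra! hcon
  unfold Loc at hcon
  push Not at hcon
  choose U hU f hf hne using hcon
  obtain ⟨t, ht⟩ := CompactSpace.elim_nhds_subcover (fun p => interior (U p))
    (fun p => interior_mem_nhds.2 (hU p))
  obtain ⟨ρ, hρ⟩ := PartitionOfUnity.exists_isSubordinate (s := Set.univ) isClosed_univ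
    (fun i : t => interior (U i)) (fun i => isOpen_interior) (by
      intro q _
      have hq : q ∈ ⋃ x ∈ t, interior (U x) := by rw [ht]; trivial
      simp only [Set.mem_iUnion] at hq ⊢
      obtain ⟨i, hi, hq⟩ := hq
      exact ⟨⟨i, hi⟩, hq⟩)
  obtain ⟨f0, hf0⟩ := hs
  apply hf0
  have h1 : f0 = ∑ i : t, bm (rst (ρ i)) f0 := by
    ext x
    have hsum := ρ.sum_eq_one (Set.mem_univ (stoneCechUnit x))
    rw [finsum_eq_sum_of_fintype] at hsum
    rw [BoundedContinuousFunction.sum_apply]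
    simp only [bm_apply, rst_apply]
    rw [← Finset.sum_smul, hsum, one_smul]
  rw [h1, map_sum, BoundedContinuousFunction.sum_apply]
  refine Finset.sum_eq_zero fun i _ => ?_
  have h2 := hT (bm (rst (ρ i)) f0) (f i) (fun x => by
    by_cases hx : ρ i (stoneCechUnit x) = 0
    · simp [hx]
    · have : stoneCechUnit x ∈ interior (U i) := hρ i (subset_tsupport _ hx)
      rw [hf i x (interior_subset this)]; simp) y
  have h3 := hne i
  rw [mul_eq_zero, norm_eq_zero, norm_eq_zero] at h2
  exact h2.resolve_right h3

theorem Loc.vanish {T : (X →ᵇ E) →L[ℝ] (Y →ᵇ F)} {y : Y} {p : StoneCech X} (h : Loc T y p)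
    (f : X →ᵇ E) (hf : Tendsto f (comap stoneCechUnit (𝓝 p)) (𝓝 0)) : T f y = 0 := by
  rw [← norm_le_zero_iff]
  refine le_of_forall_pos_le_add fun ε hε => ?_
  rw [zero_add]
  obtain ⟨δ, hδ, hδε⟩ : ∃ δ > 0, ‖T‖ * δ ≤ ε := by
    refine ⟨ε / (‖T‖ + 1), by positivity, ?_⟩
    rw [mul_div_assoc', div_le_iff₀ (by positivity)]
    nlinarith [norm_nonneg T]
  have h1 := hf.eventually (Metric.ball_mem_nhds 0 hδ)
  rw [eventually_comap] at h1
  obtain ⟨V, hV, hVo, hpV⟩ := mem_nhds_iff.1 h1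
  obtain ⟨W, hW, hWV⟩ : ∃ W ∈ 𝓝 p, closure W ⊆ V := by
    obtain ⟨W, hW, hWc, hWV⟩ := exists_mem_nhds_isClosed_subset (hVo.mem_nhds hpV)
    exact ⟨W, hW, by rwa [hWc.closure_eq]⟩
  obtain ⟨χ, h0, h1', h01⟩ := exists_continuous_zero_one_of_isClosed (s := Vᶜ) (t := closure W)
    hVo.isClosed_compl isClosed_closure (Set.disjoint_left.2 fun a ha hb => ha (hWV hb))
  have h2 : T (f - bm (rst χ) f) y = 0 := by
    refine h W hW _ fun x hx => ?_
    have := h1' (subset_closure hx)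
    simp [this]
  have h3 : T f y = T (bm (rst χ) f) y := by
    rw [map_sub, BoundedContinuousFunction.sub_apply, sub_eq_zero] at h2
    exact h2
  rw [h3]
  calc ‖T (bm (rst χ) f) y‖ ≤ ‖T (bm (rst χ) f)‖ := BoundedContinuousFunction.norm_coe_le_norm _ _
    _ ≤ ‖T‖ * ‖bm (rst χ) f‖ := T.le_opNorm _
    _ ≤ ‖T‖ * δ := by
      refine mul_le_mul_of_nonneg_left ?_ (norm_nonneg T)
      refine (BoundedContinuousFunction.norm_le hδ.le).2 fun x => ?_
      rw [bm_apply, rst_apply, norm_smul]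
      by_cases hx : stoneCechUnit x ∈ V
      · have := hV hx x rfl
        rw [dist_zero_right] at this
        have h4 := h01 (stoneCechUnit x)
        rw [Real.norm_of_nonneg h4.1]
        nlinarith [h4.1, h4.2, norm_nonneg (f x)]
      · have := h0 hx
        rw [this]; simp [hδ.le]
    _ ≤ ε := hδε

theorem Loc.mul {T : (X →ᵇ E) →L[ℝ] (Y →ᵇ F)} {y : Y} {p : StoneCech X} (h : Loc T y p)
    (φ : C(StoneCech X, ℝ)) (f : X →ᵇ E) : T (bm (rst φ) f) y = φ p • T f y := by
  have h1 : T (bm (rst φ) f - φ p • f) y = 0 := by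
    refine h.vanish _ ?_
    have hφ : Tendsto (fun x => ‖φ (stoneCechUnit x) - φ p‖ * ‖f‖) (comap stoneCechUnit (𝓝 p)) (𝓝 0) := by
      have h2 : Tendsto (fun x : X => φ (stoneCechUnit x)) (comap stoneCechUnit (𝓝 p)) (𝓝 (φ p)) :=
        (φ.continuous.tendsto p).comp tendsto_comap
      have h3 := ((h2.sub_const (φ p)).norm).mul_const ‖f‖
      simpa using h3
    refine squeeze_zero_norm (fun x => ?_) hφ
    have : (bm (rst φ) f - φ p • f) x = (φ (stoneCechUnit x) - φ p) • f x := by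
      simp [sub_smul]
    rw [this, norm_smul]
    exact mul_le_mul_of_nonneg_left (f.norm_coe_le_norm x) (norm_nonneg _)
  rw [map_sub, map_smul, BoundedContinuousFunction.sub_apply, sub_eq_zero] at h1
  exact h1

theorem loc_cont {T : (X →ᵇ E) →L[ℝ] (Y →ᵇ F)} {h : Y → StoneCech X} (hh : ∀ y, Loc T y (h y))
    (hs : ∀ y, ∃ f, T f y ≠ 0) (φ : C(StoneCech X, ℝ)) (hφ : ∀ p, 0 ≤ φ p) :
    Continuous fun y => φ (h y) := by
  rw [continuous_iff_continuousAt]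
  intro y
  obtain ⟨f, hf⟩ := hs y
  have h1 : ContinuousAt (fun z => ‖T (bm (rst φ) f) z‖ / ‖T f z‖) y :=
    ((T _).continuous.norm.continuousAt).div ((T f).continuous.norm.continuousAt) (norm_ne_zero_iff.2 hf)
  refine h1.congr ?_
  filter_upwards [(T f).continuous.continuousAt.eventually_ne hf] with z hz
  rw [(hh z).mul, norm_smul, Real.norm_of_nonneg (hφ _)]
  field_simp [norm_ne_zero_iff.2 hz]

/-- Realcompactness. -/
theorem realcompact_sep (hX : Realcompact X) (p : StoneCech X) (hp : ∀ x, stoneCechUnit x ≠ p) :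
    ∃ φ : C(StoneCech X, ℝ), (∀ q, 0 ≤ φ q) ∧ φ p = 0 ∧ ∀ x, 0 < φ (stoneCechUnit x) := by
  obtain ⟨ι, e, he⟩ := hX
  have hne : (comap (stoneCechUnit : X → StoneCech X) (𝓝 p)).NeBot := by
    rw [comap_neBot_iff]
    intro t ht
    obtain ⟨x, hx⟩ := denseRange_stoneCechUnit.exists_mem_open isOpen_interior
      ⟨p, mem_interior_iff_mem_nhds.2 ht⟩
    exact ⟨x, interior_subset hx⟩
  by_cases hc : ∀ i, ∃ c, Tendsto (fun x => e x i) (comap stoneCechUnit (𝓝 p)) (𝓝 c)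
  · exfalso
    choose q hq using hc
    have h1 : Tendsto e (comap stoneCechUnit (𝓝 p)) (𝓝 q) := tendsto_pi_nhds.2 hq
    have h2 : q ∈ Set.range e := by
      rw [← he.isClosed_range.closure_eq]
      exact mem_closure_of_tendsto h1 (Eventually.of_forall fun x => ⟨x, rfl⟩)
    obtain ⟨x, rfl⟩ := h2
    have h3 : Tendsto id (comap stoneCechUnit (𝓝 p)) (𝓝 x) :=
      he.isEmbedding.tendsto_nhds_iff.2 h1
    have h4 := (continuous_stoneCechUnit.tendsto x).comp h3
    exact hp x (tendsto_nhds_unique h4 tendsto_comap)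
  · push Not at hc
    obtain ⟨i, hi⟩ := hc
    have hei : Continuous fun x => e x i := (continuous_apply i).comp he.continuous
    let g : X → Set.Icc (0:ℝ) 1 := fun x => ⟨(1 + |e x i|)⁻¹, by positivity,
      inv_le_one_of_one_le₀ (by linarith [abs_nonneg (e x i)])⟩
    have hg : Continuous g := by
      refine Continuous.subtype_mk ?_ _
      refine Continuous.inv₀ (by fun_prop) fun x => ?_
      positivity
    refine ⟨⟨fun q => ((stoneCechExtend hg q : Set.Icc (0:ℝ) 1) : ℝ),
      continuous_subtype_val.comp (continuous_stoneCechExtend hg)⟩, fun q => (stoneCechExtend hg q).2.1, ?_, ?_⟩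
    · by_contra hne0
      change ((stoneCechExtend hg p : Set.Icc (0:ℝ) 1) : ℝ) ≠ 0 at hne0
      set c : ℝ := ((stoneCechExtend hg p : Set.Icc (0:ℝ) 1) : ℝ) with hcdef
      have hc0 : 0 < c := lt_of_le_of_ne (stoneCechExtend hg p).2.1 (Ne.symm hne0)
      set M : ℝ := 2 / c with hM
      have hM0 : 0 < M := by positivity
      let k : X → Set.Icc (-M) M := fun x => Set.projIcc (-M) M (by linarith) (e x i)
      have hk : Continuous k := continuous_projIcc.comp hei
      have h1 : Tendsto (fun x => ((stoneCechExtend hk (stoneCechUnit x) : Set.Icc (-M) M) : ℝ))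
          (comap stoneCechUnit (𝓝 p)) (𝓝 ((stoneCechExtend hk p : Set.Icc (-M) M) : ℝ)) :=
        ((continuous_subtype_val.comp (continuous_stoneCechExtend hk)).tendsto p).comp tendsto_comap
      have h2 : Tendsto (fun x => ((stoneCechExtend hg (stoneCechUnit x) : Set.Icc (0:ℝ) 1) : ℝ))
          (comap stoneCechUnit (𝓝 p)) (𝓝 c) :=
        ((continuous_subtype_val.comp (continuous_stoneCechExtend hg)).tendsto p).comp tendsto_comap
      refine hi _ (h1.congr' ?_)
      filter_upwards [h2.eventually (lt_mem_nhds (show c / 2 < c by linarith))] with x hx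
      rw [stoneCechExtend_stoneCechUnit] at hx ⊢
      have h3 : c / 2 < (1 + |e x i|)⁻¹ := hx
      have h4 : 1 + |e x i| < M := by
        have := (lt_inv_comm₀ (by positivity) (by positivity)).1 h3
        rwa [inv_div] at this
      have h5 : e x i ∈ Set.Icc (-M) M := abs_le.1 (by linarith)
      change ((Set.projIcc (-M) M _ (e x i) : Set.Icc (-M) M) : ℝ) = e x i
      rw [Set.projIcc_of_mem _ h5]
    · intro x
      change 0 < ((stoneCechExtend hg (stoneCechUnit x) : Set.Icc (0:ℝ) 1) : ℝ)
      rw [stoneCechExtend_stoneCechUnit]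
      change 0 < (1 + |e x i|)⁻¹
      positivity

theorem bump {Y : Type} [TopologicalSpace Y] [CompletelyRegularSpace Y] (y : Y) (W : Set Y) (hW : W ∈ 𝓝 y) :
    ∃ β : Y →ᵇ ℝ, β y = 1 ∧ ∀ z, z ∉ W → β z = 0 := by
  obtain ⟨f, hf, h0, h1⟩ := CompletelyRegularSpace.completely_regular y (interior W)ᶜ
    isOpen_interior.isClosed_compl (by simpa using mem_interior_iff_mem_nhds.2 hW)
  refine ⟨BoundedContinuousFunction.ofNormedAddCommGroup (fun z => 1 - (f z : ℝ)) (by fun_prop) 1 ?_, ?_, ?_⟩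
  · intro z
    rw [Real.norm_of_nonneg (by linarith [(f z).2.2])]
    linarith [(f z).2.1]
  · simp [h0]
  · intro z hz
    have := h1 (show z ∈ (interior W)ᶜ from fun h => hz (interior_subset h))
    simp [this]
end

section
variable {X Y E F : Type} [TopologicalSpace X] [TopologicalSpace Y]
  [NormedAddCommGroup E] [NormedSpace ℝ E] [NormedAddCommGroup F] [NormedSpace ℝ F]

theorem back_loc {T : (X →ᵇ E) →L[ℝ] (Y →ᵇ F)} {h : Y → StoneCech X} (hh : ∀ y, Loc T y (h y))
    (hinj : Function.Injective T) (φ : C(StoneCech X, ℝ)) (x : X) (k : X →ᵇ E)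
    (hk : ∀ᶠ t in 𝓝 (φ (stoneCechUnit x)), ∀ z, φ (h z) = t → T k z = 0) : k x = 0 := by
  obtain ⟨r, hr, hrk⟩ := Metric.eventually_nhds_iff.1 hk
  set t0 := φ (stoneCechUnit x) with ht0
  let θ : C(StoneCech X, ℝ) := ⟨fun q => max 0 (1 - |φ q - t0| / r), by fun_prop⟩
  have h1 : T (bm (rst θ) k) = 0 := by
    ext z
    rw [(hh z).mul]
    by_cases hz : dist (φ (h z)) t0 < r
    · rw [hrk hz z rfl]; simp
    · have : θ (h z) = 0 := by
        refine max_eq_left ?_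
        rw [Real.dist_eq, not_lt] at hz
        rw [sub_nonpos, le_div_iff₀ hr]; linarith
      rw [this]; simp
  have h2 : bm (rst θ) k = 0 := hinj (by rw [h1, map_zero])
  have h3 := DFunLike.congr_fun h2 x
  have h4 : θ (stoneCechUnit x) = 1 := by
    change max 0 (1 - |t0 - t0| / r) = 1
    simp
  simpa [h4] using h3

theorem const_smul_eq (c : ℝ) (u : F) :
    BoundedContinuousFunction.const Y (c • u) = c • BoundedContinuousFunction.const Y u := rfl

theorem plat_bound {T : (X →ᵇ E) →L[ℝ] (Y →ᵇ F)} {h : Y → StoneCech X} (hh : ∀ y, Loc T y (h y))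
    (hinj : Function.Injective T) (S : (Y →ᵇ F) →ₗ[ℝ] (X →ᵇ E)) (hTS : ∀ g, T (S g) = g)
    (φ : C(StoneCech X, ℝ)) (hφ : ∀ q, 0 ≤ φ q) (hφX : ∀ x, 0 < φ (stoneCechUnit x))
    (hψ : Continuous fun z => φ (h z)) (a : ℝ) (ha : 0 ≤ a) :
    ∃ M s0 : ℝ, 0 ≤ M ∧ ∀ x, s0 ≤ (φ (stoneCechUnit x))⁻¹ → Plat ((φ (stoneCechUnit x))⁻¹ + a) →
      ∀ u : F, ‖S (BoundedContinuousFunction.const Y u) x‖ ≤ M * ‖u‖ := by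
  let P : ℕ → ℕ → Prop := fun k m => ∃ (x : X) (u : F), ⌊(φ (stoneCechUnit x))⁻¹ + a⌋₊ = m ∧
    Plat ((φ (stoneCechUnit x))⁻¹ + a) ∧ ‖u‖ ≤ 1 / ((k : ℝ) + 1) ∧
    (k : ℝ) < ‖S (BoundedContinuousFunction.const Y u) x‖
  by_cases hP : ∀ k, ∃ᶠ m in atTop, P k m
  · exfalso
    obtain ⟨σ, hσ, hσP⟩ := extraction_forall_of_frequently hP
    choose x u hfl hpl hu hS using hσP
    let u' : ℕ → F := Function.extend σ u 0
    have hu'σ : ∀ k, u' (σ k) = u k := fun k => hσ.injective.extend_apply u 0 k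
    have hu'1 : ∀ m, ‖u' m‖ ≤ 1 := by
      intro m
      by_cases hm : ∃ k, σ k = m
      · obtain ⟨k, rfl⟩ := hm
        rw [hu'σ]
        refine (hu k).trans ?_
        rw [div_le_one (by positivity)]
        have : (0:ℝ) ≤ k := by positivity
        linarith
      · have : u' m = 0 := Function.extend_apply' u (0 : ℕ → F) m hm
        simp [this]
    have hu'0 : ∀ ε > 0, ∃ N : ℕ, ∀ m ≥ N, ‖u' m‖ < ε := by
      intro ε hε
      obtain ⟨n, hn⟩ := exists_nat_one_div_lt hε
      refine ⟨σ n, fun m hm => ?_⟩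
      by_cases hm' : ∃ k, σ k = m
      · obtain ⟨k, rfl⟩ := hm'
        rw [hu'σ]
        have hnk : n ≤ k := hσ.le_iff_le.1 hm
        refine (hu k).trans_lt (lt_of_le_of_lt ?_ hn)
        exact Nat.one_div_le_one_div hnk
      · have : u' m = 0 := Function.extend_apply' u (0 : ℕ → F) m hm'
        simpa [this] using hε
    let Γ : ℝ → F := fun s => stair u' (s + a)
    have hΓ : Continuous Γ := (stair_cont u').comp (by fun_prop)
    let g0 : Y → F := fun z => if φ (h z) = 0 then 0 else Γ (φ (h z))⁻¹
    have hg0 : Continuous g0 := by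
      rw [continuous_iff_continuousAt]
      intro z
      by_cases hz : φ (h z) = 0
      · have hgz : g0 z = 0 := if_pos hz
        unfold ContinuousAt
        rw [hgz, Metric.tendsto_nhds]
        intro ε hε
        obtain ⟨N, hN⟩ := hu'0 ε hε
        have h1 : ∀ᶠ w in 𝓝 z, φ (h w) < 1 / ((N : ℝ) + 1) := by
          refine hψ.continuousAt.eventually (gt_mem_nhds ?_)
          simp only [hz]; positivity
        filter_upwards [h1] with w hw
        rw [dist_zero_right]
        by_cases hw0 : φ (h w) = 0
        · have : g0 w = 0 := if_pos hw0
          rw [this]; simpa using hε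
        · have : g0 w = Γ (φ (h w))⁻¹ := if_neg hw0
          rw [this]
          refine (stair_norm u' _).trans_lt (hN _ ?_)
          have hpos : 0 < φ (h w) := lt_of_le_of_ne (hφ _) (Ne.symm hw0)
          apply Nat.le_floor
          have : (N : ℝ) + 1 < (φ (h w))⁻¹ := by
            rw [lt_inv_comm₀ (by positivity) hpos]; simpa using hw
          linarith
      · have h1 : ContinuousAt (fun w => Γ (φ (h w))⁻¹) z :=
          hΓ.continuousAt.comp (hψ.continuousAt.inv₀ hz)
        refine h1.congr ?_
        filter_upwards [hψ.continuousAt.eventually_ne hz] with w hw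
        exact (if_neg hw).symm
    let g : Y →ᵇ F := BoundedContinuousFunction.ofNormedAddCommGroup g0 hg0 1 (by
      intro z
      change ‖if φ (h z) = 0 then 0 else Γ (φ (h z))⁻¹‖ ≤ 1
      split_ifs
      · simp
      · exact (stair_norm u' _).trans (hu'1 _))
    obtain ⟨k, hk⟩ := exists_nat_gt ‖S g‖
    have h1 : S (g - BoundedContinuousFunction.const Y (u k)) (x k) = 0 := by
      refine back_loc hh hinj φ (x k) _ ?_
      rw [hTS]
      have h2 := stair_loc u' (hpl k)
      have hcont : ContinuousAt (fun t : ℝ => t⁻¹ + a) (φ (stoneCechUnit (x k))) :=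
        (continuousAt_inv₀ (hφX _).ne').add continuousAt_const
      filter_upwards [hcont.eventually h2, eventually_ne_nhds (hφX (x k)).ne'] with t ht ht0 z hz
      have : g z = u k := by
        change (if φ (h z) = 0 then 0 else Γ (φ (h z))⁻¹) = u k
        rw [hz, if_neg ht0]
        change stair u' (t⁻¹ + a) = u k
        rw [ht, hfl, hu'σ]
      simp [this]
    rw [map_sub, BoundedContinuousFunction.sub_apply, sub_eq_zero] at h1
    have h3 := hS k
    rw [← h1] at h3
    linarith [(S g).norm_coe_le_norm (x k)]
  · push Not at hP
    obtain ⟨k, hk⟩ := hP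
    obtain ⟨m0, hm0⟩ := eventually_atTop.1 hk
    refine ⟨k * (k + 1), m0, by positivity, fun x hx hpl u => ?_⟩
    by_cases hu : u = 0
    · subst hu
      have : BoundedContinuousFunction.const Y (0 : F) = 0 := rfl
      simp [this]
    have hu0 : 0 < ‖u‖ := norm_pos_iff.2 hu
    have hnP := hm0 ⌊(φ (stoneCechUnit x))⁻¹ + a⌋₊ (Nat.le_floor (by linarith))
    have hk1 : (0:ℝ) < (k:ℝ) + 1 := by positivity
    set c : ℝ := 1 / (((k:ℝ) + 1) * ‖u‖) with hc
    have hc0 : 0 < c := by positivity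
    by_contra! hlt
    refine hnP ⟨x, c • u, rfl, hpl, ?_, ?_⟩
    · rw [norm_smul, Real.norm_of_nonneg hc0.le, hc]
      apply le_of_eq; field_simp
    · rw [const_smul_eq, map_smul, BoundedContinuousFunction.smul_apply, norm_smul,
        Real.norm_of_nonneg hc0.le, hc, div_mul_eq_mul_div, lt_div_iff₀ (by positivity)]
      linarith

theorem osc {T : (X →ᵇ E) →L[ℝ] (Y →ᵇ F)} {h : Y → StoneCech X} (hh : ∀ y, Loc T y (h y))
    (S : (Y →ᵇ F) →ₗ[ℝ] (X →ᵇ E)) (hTS : ∀ g, T (S g) = g)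
    (φ : C(StoneCech X, ℝ)) (hφX : ∀ x, 0 < φ (stoneCechUnit x)) (M s0 : ℝ) (hM0 : 0 ≤ M)
    (hM : ∀ x, s0 ≤ (φ (stoneCechUnit x))⁻¹ →
      ∀ u : F, ‖S (BoundedContinuousFunction.const Y u) x‖ ≤ M * ‖u‖)
    (γ : ℝ → F) (hγ : Continuous γ) (R : ℝ) (hR : ∀ s, ‖γ s‖ ≤ R) :
    ∃ f : X →ᵇ E, ∀ z, 0 < φ (h z) → s0 + 1 ≤ (φ (h z))⁻¹ → T f z = γ (φ (h z))⁻¹ := by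
  let κ : ℝ → ℝ := fun s => max 0 (min 1 (s - s0))
  have hκ : Continuous κ := by fun_prop
  have hκ0 : ∀ s, 0 ≤ κ s := fun s => le_max_left _ _
  have hκ1 : ∀ s, κ s ≤ 1 := fun s => max_le zero_le_one (min_le_left _ _)
  let s : X → ℝ := fun x => (φ (stoneCechUnit x))⁻¹
  have hs : Continuous s := (φ.continuous.comp continuous_stoneCechUnit).inv₀ fun x => (hφX x).ne'
  have hB : ∀ x u, ‖κ (s x) • S (BoundedContinuousFunction.const Y u) x‖ ≤ M * ‖u‖ := by
    intro x u
    rw [norm_smul, Real.norm_of_nonneg (hκ0 _)]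
    by_cases hx : s0 ≤ s x
    · exact (mul_le_of_le_one_left (norm_nonneg _) (hκ1 _)).trans (hM x hx u)
    · have : κ (s x) = 0 := max_eq_left ((min_le_right _ _).trans (by linarith))
      rw [this, zero_mul]; positivity
  let f0 : X → E := fun x => κ (s x) • S (BoundedContinuousFunction.const Y (γ (s x))) x
  have hdiff : ∀ x w, f0 x - κ (s x) • S (BoundedContinuousFunction.const Y w) x
      = κ (s x) • S (BoundedContinuousFunction.const Y (γ (s x) - w)) x := by
    intro x w
    have : BoundedContinuousFunction.const Y (γ (s x) - w) =
      BoundedContinuousFunction.const Y (γ (s x)) - BoundedContinuousFunction.const Y w := rfl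
    rw [this, map_sub, BoundedContinuousFunction.sub_apply, smul_sub]
  have hf0 : Continuous f0 := by
    rw [continuous_iff_continuousAt]
    intro x0
    have h1 : Tendsto (fun x => f0 x - κ (s x) • S (BoundedContinuousFunction.const Y (γ (s x0))) x)
        (𝓝 x0) (𝓝 0) := by
      have h2 : Tendsto (fun x => M * ‖γ (s x) - γ (s x0)‖) (𝓝 x0) (𝓝 0) := by
        have : Continuous fun x => M * ‖γ (s x) - γ (s x0)‖ := by fun_prop
        simpa using this.tendsto x0
      refine squeeze_zero_norm (fun x => ?_) h2
      rw [hdiff]; exact hB _ _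
    have h3 : Continuous fun x => κ (s x) • S (BoundedContinuousFunction.const Y (γ (s x0))) x := by
      fun_prop
    have h4 := h1.add (h3.tendsto x0)
    simpa [ContinuousAt, f0] using h4
  let f : X →ᵇ E := BoundedContinuousFunction.ofNormedAddCommGroup f0 hf0 (M * R) (fun x =>
    (hB x _).trans (mul_le_mul_of_nonneg_left (hR _) hM0))
  refine ⟨f, fun z hz hz1 => ?_⟩
  set s1 := (φ (h z))⁻¹ with hs1
  have hκs1 : κ s1 = 1 := by
    change max 0 (min 1 (s1 - s0)) = 1
    rw [min_eq_left (by linarith)]; simp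
  have h1 : T (f - S (BoundedContinuousFunction.const Y (γ s1))) z = 0 := by
    refine (hh z).vanish _ ?_
    have hts : Tendsto s (comap stoneCechUnit (𝓝 (h z))) (𝓝 s1) :=
      ((φ.continuous.tendsto (h z)).comp tendsto_comap).inv₀ hz.ne'
    have h2 : Tendsto (fun x => M * ‖γ (s x) - γ s1‖ +
        |κ (s x) - 1| * ‖S (BoundedContinuousFunction.const Y (γ s1))‖)
        (comap stoneCechUnit (𝓝 (h z))) (𝓝 0) := by
      have hc : Continuous fun r => M * ‖γ r - γ s1‖ +
        |κ r - 1| * ‖S (BoundedContinuousFunction.const Y (γ s1))‖ := by fun_prop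
      have := (hc.tendsto s1).comp hts
      simpa [hκs1, Function.comp_def] using this
    refine squeeze_zero_norm (fun x => ?_) h2
    have h3 : (f - S (BoundedContinuousFunction.const Y (γ s1))) x =
        (f0 x - κ (s x) • S (BoundedContinuousFunction.const Y (γ s1)) x) +
        (κ (s x) - 1) • S (BoundedContinuousFunction.const Y (γ s1)) x := by
      rw [BoundedContinuousFunction.sub_apply, sub_smul, one_smul]
      change f0 x - _ = _
      abel
    rw [h3]
    refine (norm_add_le _ _).trans (add_le_add ?_ ?_)
    · rw [hdiff]; exact hB _ _
    · rw [norm_smul, Real.norm_eq_abs]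
      exact mul_le_mul_of_nonneg_left (BoundedContinuousFunction.norm_coe_le_norm _ _) (abs_nonneg _)
  rw [map_sub, hTS, BoundedContinuousFunction.sub_apply, sub_eq_zero] at h1
  exact h1

theorem sep_away (v : ℕ → F) (hv : Pairwise fun m n => 1 ≤ ‖v m - v n‖) (w : F) :
    ∃ m0, ∀ m ≥ m0, 1 / 2 ≤ ‖v m - w‖ := by
  by_cases hm : ∃ m, ‖v m - w‖ < 1 / 2
  · obtain ⟨m1, hm1⟩ := hm
    refine ⟨m1 + 1, fun m hm => ?_⟩
    have h1 := hv (show m ≠ m1 by omega)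
    have h2 : ‖v m - v m1‖ ≤ ‖v m - w‖ + ‖v m1 - w‖ := by
      have := norm_sub_le (v m - w) (v m1 - w)
      simpa using this
    linarith
  · push Not at hm
    exact ⟨0, fun m _ => hm m⟩

theorem in_X [CompletelyRegularSpace Y] (hX : Realcompact X)
    {T : (X →ᵇ E) →L[ℝ] (Y →ᵇ F)} {h : Y → StoneCech X} (hh : ∀ y, Loc T y (h y))
    (S : (Y →ᵇ F) →ₗ[ℝ] (X →ᵇ E)) (hTS : ∀ g, T (S g) = g) (hinj : Function.Injective T)
    (v : ℕ → F) (R : ℝ) (hvR : ∀ n, ‖v n‖ ≤ R) (hv : Pairwise fun m n => 1 ≤ ‖v m - v n‖)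
    (y : Y) : ∃ x, stoneCechUnit x = h y := by
  by_contra! hcon
  obtain ⟨v0, hv0⟩ : ∃ v0 : F, v0 ≠ 0 := by
    by_contra! h0
    have := hv (show 0 ≠ 1 by norm_num)
    simp [h0] at this
    linarith
  have hs : ∀ z, ∃ f, T f z ≠ 0 := fun z =>
    ⟨S (BoundedContinuousFunction.const Y v0), by rw [hTS]; simpa using hv0⟩
  obtain ⟨φ, hφ, hφp, hφX⟩ := realcompact_sep hX (h y) hcon
  have hψ := loc_cont hh hs φ hφ
  have hfreq : ∃ᶠ z in 𝓝 y, 0 < φ (h z) := by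
    intro hev
    obtain ⟨β, hβ1, hβ0⟩ := bump y _ hev
    set g := bm β (BoundedContinuousFunction.const Y v0) with hg
    have h1 : T (bm (rst φ) (S g)) = 0 := by
      ext z
      rw [(hh z).mul, hTS]
      by_cases hz : 0 < φ (h z)
      · have := hβ0 z (by simpa using hz)
        simp [hg, this]
      · have : φ (h z) = 0 := le_antisymm (not_lt.1 hz) (hφ _)
        simp [this]
    have h2 : bm (rst φ) (S g) = 0 := hinj (by rw [h1, map_zero])
    have h3 : S g = 0 := by
      ext x
      have := DFunLike.congr_fun h2 x
      simpa [(hφX x).ne'] using this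
    have h4 : g = 0 := by rw [← hTS g, h3, map_zero]
    have h5 := DFunLike.congr_fun h4 y
    simp [hg, hβ1, hv0] at h5
  obtain ⟨M1, s1, hM1, hb1⟩ := plat_bound hh hinj S hTS φ hφ hφX hψ 0 le_rfl
  obtain ⟨M2, s2, hM2, hb2⟩ := plat_bound hh hinj S hTS φ hφ hφX hψ (1/2) (by norm_num)
  have hM : ∀ x, max s1 s2 ≤ (φ (stoneCechUnit x))⁻¹ →
      ∀ u : F, ‖S (BoundedContinuousFunction.const Y u) x‖ ≤ max M1 M2 * ‖u‖ := by
    intro x hx u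
    rcases plat_or ((φ (stoneCechUnit x))⁻¹) with hp | hp
    · refine (hb1 x ((le_max_left _ _).trans hx) (by simpa using hp) u).trans ?_
      gcongr; exact le_max_left _ _
    · refine (hb2 x ((le_max_right _ _).trans hx) hp u).trans ?_
      gcongr; exact le_max_right _ _
  have key : ∀ a : ℝ, 0 ≤ a → ∀ᶠ z in 𝓝 y, 0 < φ (h z) → ¬ Plat ((φ (h z))⁻¹ + a) := by
    intro a ha
    obtain ⟨f, hf⟩ := osc hh S hTS φ hφX (max M1 M2) (max s1 s2) (le_max_of_le_left hM1) hM
      (fun s => stair v (s + a)) ((stair_cont v).comp (by fun_prop)) R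
      (fun s => (stair_norm v _).trans (hvR _))
    obtain ⟨m0, hm0⟩ := sep_away v hv (T f y)
    have hev1 : ∀ᶠ z in 𝓝 y, ‖T f z - T f y‖ < 1 / 2 := by
      have := Metric.tendsto_nhds.1 ((T f).continuous.tendsto y) (1/2) (by norm_num)
      simpa [dist_eq_norm] using this
    have hev2 : ∀ᶠ z in 𝓝 y, φ (h z) < 1 / (|max s1 s2| + 1 + m0) := by
      refine hψ.continuousAt.eventually (gt_mem_nhds ?_)
      simp only [hφp]; positivity
    filter_upwards [hev1, hev2] with z hz1 hz2 hpos hpl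
    have hbig : |max s1 s2| + 1 + m0 < (φ (h z))⁻¹ := by
      rw [lt_inv_comm₀ (by positivity) hpos]; simpa using hz2
    have hm0' : (0:ℝ) ≤ m0 := by positivity
    rw [hf z hpos (by linarith [le_abs_self (max s1 s2)]), stair_plat v hpl] at hz1
    have := hm0 ⌊(φ (h z))⁻¹ + a⌋₊ (Nat.le_floor (by linarith [abs_nonneg (max s1 s2)]))
    linarith
  obtain ⟨z, hz, hz1, hz2⟩ := (hfreq.and_eventually ((key 0 le_rfl).and (key (1/2) (by norm_num)))).exists
  rcases plat_or ((φ (h z))⁻¹) with hp | hp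
  · exact hz1 hz (by simpa using hp)
  · exact hz2 hz hp

theorem surj_J {T : (X →ᵇ E) →L[ℝ] (Y →ᵇ F)} {y : Y} {x : X} [CompletelyRegularSpace X]
    (hy : Loc T y (stoneCechUnit x)) (f : X →ᵇ E) :
    T (BoundedContinuousFunction.const X (f x)) y = T f y := by
  have : T (f - BoundedContinuousFunction.const X (f x)) y = 0 := by
    refine hy.vanish _ ?_
    rw [← isInducing_stoneCechUnit.nhds_eq_comap]
    have := (f - BoundedContinuousFunction.const X (f x)).continuous.tendsto x
    simpa using this
  rw [map_sub, BoundedContinuousFunction.sub_apply, sub_eq_zero] at this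
  exact this.symm

theorem loc_back_pt [CompletelyRegularSpace X] [CompletelyRegularSpace Y]
    {T : (X →ᵇ E) →L[ℝ] (Y →ᵇ F)} (S : (Y →ᵇ F) →ₗ[ℝ] (X →ᵇ E)) (hTS : ∀ g, T (S g) = g)
    (hST : ∀ f, S (T f) = f) (hS : SeparatingB ⇑S) (v0 : F) (hv0 : v0 ≠ 0)
    {y : Y} {x : X} (hy : Loc T y (stoneCechUnit x)) (k : X →ᵇ E)
    (hk : ∀ᶠ z in 𝓝 y, T k z = 0) : k x = 0 := by
  obtain ⟨β, hβ1, hβ0⟩ := bump y _ hk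
  set g := bm β (BoundedContinuousFunction.const Y v0) with hg
  have h1 := hS (T k) g (fun z => by
    by_cases hz : T k z = 0
    · simp [hz]
    · simp [hg, hβ0 z hz]) x
  rw [hST, mul_eq_zero, norm_eq_zero, norm_eq_zero] at h1
  refine h1.resolve_right fun h0 => hv0 ?_
  have h2 := surj_J hy (S g)
  rw [h0, hTS] at h2
  have h3 : BoundedContinuousFunction.const X (0 : E) = 0 := rfl
  rw [h3, map_zero] at h2
  simpa [hg, hβ1] using h2.symm

theorem inj_J [CompletelyRegularSpace X] [CompletelyRegularSpace Y]
    {T : (X →ᵇ E) →L[ℝ] (Y →ᵇ F)} (S : (Y →ᵇ F) →ₗ[ℝ] (X →ᵇ E)) (hTS : ∀ g, T (S g) = g)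
    (hST : ∀ f, S (T f) = f) (hS : SeparatingB ⇑S) (v0 : F) (hv0 : v0 ≠ 0)
    {h : Y → X} (hh : ∀ y, Loc T y (stoneCechUnit (h y))) (y : Y) (e : E)
    (he : T (BoundedContinuousFunction.const X e) y = 0) : e = 0 := by
  by_contra hne
  have hepos : 0 < ‖e‖ := norm_pos_iff.2 hne
  set g := T (BoundedContinuousFunction.const X e) with hg
  have key : ∀ a : ℝ, 0 ≤ a → a ≤ 1 → ∃ K : ℝ, ∀ z, g z ≠ 0 → Plat (‖g z‖⁻¹ + a) →
      ‖g z‖⁻¹ ≤ K := by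
    intro a ha ha1
    let u : ℕ → ℝ := fun m => √m
    let G0 : Y → F := fun z => stair u (‖g z‖⁻¹ + a) • g z
    have hGb : ∀ z, ‖G0 z‖ ≤ √(‖g z‖ + ‖g z‖ ^ 2) := by
      intro z
      apply Real.le_sqrt_of_sq_le
      by_cases hz : g z = 0
      · simp [G0, hz]
      have hpos : 0 < ‖g z‖ := norm_pos_iff.2 hz
      have h1 : ‖stair u (‖g z‖⁻¹ + a)‖ ^ 2 ≤ ‖g z‖⁻¹ + a := by
        have h2 := stair_norm u (‖g z‖⁻¹ + a)
        have h3 : ‖u ⌊‖g z‖⁻¹ + a⌋₊‖ ^ 2 ≤ ‖g z‖⁻¹ + a := by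
          simp only [u]
          rw [Real.norm_of_nonneg (Real.sqrt_nonneg _), Real.sq_sqrt (by positivity)]
          exact Nat.floor_le (by positivity)
        exact (pow_le_pow_left₀ (norm_nonneg _) h2 2).trans h3
      change ‖stair u (‖g z‖⁻¹ + a) • g z‖ ^ 2 ≤ _
      rw [norm_smul, mul_pow]
      calc _ ≤ (‖g z‖⁻¹ + a) * ‖g z‖ ^ 2 := by gcongr
        _ = ‖g z‖ + a * ‖g z‖ ^ 2 := by field_simp
        _ ≤ _ := by nlinarith [sq_nonneg ‖g z‖]
    have hG0 : Continuous G0 := by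
      rw [continuous_iff_continuousAt]
      intro z
      by_cases hz : g z = 0
      · have hz' : G0 z = 0 := by simp [G0, hz]
        unfold ContinuousAt
        rw [hz']
        refine squeeze_zero_norm hGb ?_
        have : Continuous fun z => √(‖g z‖ + ‖g z‖ ^ 2) := by fun_prop
        simpa [hz] using this.tendsto z
      · have h1 : ContinuousAt (fun z => ‖g z‖⁻¹ + a) z :=
          (g.continuous.norm.continuousAt.inv₀ (norm_ne_zero_iff.2 hz)).add continuousAt_const
        have h2 : ContinuousAt (fun z => stair u (‖g z‖⁻¹ + a)) z :=
          ContinuousAt.comp (f := fun z => ‖g z‖⁻¹ + a) (stair_cont u).continuousAt h1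
        exact h2.smul g.continuous.continuousAt
    let G : Y →ᵇ F := BoundedContinuousFunction.ofNormedAddCommGroup G0 hG0
      (√(‖g‖ + ‖g‖ ^ 2)) (fun z => (hGb z).trans (by
        have := g.norm_coe_le_norm z
        gcongr))
    refine ⟨(‖S G‖ / ‖e‖) ^ 2 + 1, fun z hz hpl => ?_⟩
    set m := ⌊‖g z‖⁻¹ + a⌋₊ with hm
    have h1 : ∀ᶠ w in 𝓝 z, T (S G - √m • BoundedContinuousFunction.const X e) w = 0 := by
      have hc : ContinuousAt (fun z => ‖g z‖⁻¹ + a) z :=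
          (g.continuous.norm.continuousAt.inv₀ (norm_ne_zero_iff.2 hz)).add continuousAt_const
      filter_upwards [hc.eventually (stair_loc u hpl)] with w hw
      rw [map_sub, map_smul, hTS, BoundedContinuousFunction.sub_apply,
        BoundedContinuousFunction.smul_apply, ← hg]
      change stair u (‖g w‖⁻¹ + a) • g w - _ = 0
      rw [hw]; simp [u, hm]
    have h2 := loc_back_pt S hTS hST hS v0 hv0 (hh z) _ h1
    have h3 : S G (h z) = √m • e := by
      rw [BoundedContinuousFunction.sub_apply, sub_eq_zero] at h2
      exact h2
    have h4 := (S G).norm_coe_le_norm (h z)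
    rw [h3, norm_smul, Real.norm_of_nonneg (Real.sqrt_nonneg _), ← le_div_iff₀ hepos] at h4
    have h5 := pow_le_pow_left₀ (Real.sqrt_nonneg _) h4 2
    rw [Real.sq_sqrt (by positivity)] at h5
    have h6 := Nat.lt_floor_add_one (‖g z‖⁻¹ + a)
    rw [← hm] at h6
    linarith
  obtain ⟨K1, hK1⟩ := key 0 le_rfl (by norm_num)
  obtain ⟨K2, hK2⟩ := key (1/2) (by norm_num) (by norm_num)
  have hev : ∀ᶠ z in 𝓝 y, g z = 0 := by
    have h1 : ∀ᶠ z in 𝓝 y, ‖g z‖ < 1 / (|max K1 K2| + 1) := by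
      refine g.continuous.norm.continuousAt.eventually (gt_mem_nhds ?_)
      simp only [he, norm_zero]; positivity
    filter_upwards [h1] with z hz
    by_contra hgz
    have hpos : 0 < ‖g z‖ := norm_pos_iff.2 hgz
    have hbig : |max K1 K2| + 1 < ‖g z‖⁻¹ := by
      rw [lt_inv_comm₀ (by positivity) hpos]; simpa using hz
    have := le_abs_self (max K1 K2)
    rcases plat_or (‖g z‖⁻¹) with hp | hp
    · linarith [hK1 z hgz (by simpa using hp), le_max_left K1 K2]
    · linarith [hK2 z hgz hp, le_max_right K1 K2]
  exact hne (loc_back_pt S hTS hST hS v0 hv0 (hh y) (BoundedContinuousFunction.const X e) hev)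

theorem core [CompletelyRegularSpace X] [CompletelyRegularSpace Y] (hX : Realcompact X)
    (T : (X →ᵇ E) →L[ℝ] (Y →ᵇ F)) (hbij : Function.Bijective T)
    (hT : SeparatingB ⇑T) (hT' : SeparatingB (Function.invFun ⇑T))
    (v : ℕ → F) (R : ℝ) (hvR : ∀ n, ‖v n‖ ≤ R) (hv : Pairwise fun m n => 1 ≤ ‖v m - v n‖)
    (y : Y) : Function.Bijective fun e : E => T (BoundedContinuousFunction.const X e) y := by
  let L := LinearEquiv.ofBijective (T : (X →ᵇ E) →ₗ[ℝ] (Y →ᵇ F)) hbij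
  let S : (Y →ᵇ F) →ₗ[ℝ] (X →ᵇ E) := L.symm
  have hTS : ∀ g, T (S g) = g := fun g => L.apply_symm_apply g
  have hST : ∀ f, S (T f) = f := fun f => L.symm_apply_apply f
  have hSinv : Function.invFun ⇑T = ⇑S := by
    funext g
    apply hbij.1
    rw [hTS, Function.invFun_eq (hbij.2 g)]
  rw [hSinv] at hT'
  obtain ⟨v0, hv0⟩ : ∃ v0 : F, v0 ≠ 0 := by
    by_contra! h0
    have := hv (show 0 ≠ 1 by norm_num)
    simp [h0] at this
    linarith
  have hs : ∀ z, ∃ f, T f z ≠ 0 := fun z =>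
    ⟨S (BoundedContinuousFunction.const Y v0), by rw [hTS]; simpa using hv0⟩
  choose h hh using fun z => exists_loc T hT z (hs z)
  choose h' hh' using in_X hX hh S hTS hbij.1 v R hvR hv
  have hloc : ∀ z, Loc T z (stoneCechUnit (h' z)) := fun z => by rw [hh']; exact hh z
  constructor
  · intro e1 e2 he
    have h1 : T (BoundedContinuousFunction.const X (e1 - e2)) y = 0 := by
      have : BoundedContinuousFunction.const X (e1 - e2) =
        BoundedContinuousFunction.const X e1 - BoundedContinuousFunction.const X e2 := rfl
      rw [this, map_sub, BoundedContinuousFunction.sub_apply, sub_eq_zero]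
      exact he
    exact sub_eq_zero.1 (inj_J S hTS hST hT' v0 hv0 hloc y _ h1)
  · intro w
    refine ⟨S (BoundedContinuousFunction.const Y w) (h' y), ?_⟩
    change T _ y = w
    rw [surj_J (hloc y), hTS]; rfl
end


/-- For a continuous linear biseparating map `T`, the maps `J_y : e ↦ (T ê)(y)` are continuous
linear bijections from `E` onto `F` with `‖J_y e‖ ≤ ‖T‖ ‖e‖`, and `y ↦ J_y` is continuous into
the strong operator topology, i.e. `y ↦ J_y e` is continuous for every `e`. -/
theorem stmt10 {𝕂 X Y E F : Type} [RCLike 𝕂]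
    [TopologicalSpace X] [CompletelyRegularSpace X] [T2Space X]
    [TopologicalSpace Y] [CompletelyRegularSpace Y] [T2Space Y]
    [NormedAddCommGroup E] [NormedSpace 𝕂 E]
    [NormedAddCommGroup F] [NormedSpace 𝕂 F]
    (hE : ¬ FiniteDimensional 𝕂 E) (hF : ¬ FiniteDimensional 𝕂 F)
    (hX : Realcompact X) (hY : Realcompact Y)
    (T : (X →ᵇ E) →L[𝕂] (Y →ᵇ F)) (hbij : Function.Bijective ⇑T)
    (hT : SeparatingB ⇑T) (hT' : SeparatingB (Function.invFun ⇑T))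
    (J : Y → E → F)
    (hJ : ∀ (y : Y) (e : E), J y e = T (BoundedContinuousFunction.const X e) y) :
    (∀ y : Y, IsLinearMap 𝕂 (J y)) ∧ (∀ y : Y, Function.Bijective (J y)) ∧
      (∀ (y : Y) (e : E), ‖J y e‖ ≤ ‖T‖ * ‖e‖) ∧
      (∀ e : E, Continuous fun y : Y => J y e) := by

  letI : NormedSpace ℝ E := NormedSpace.restrictScalars ℝ 𝕂 E
  letI : NormedSpace ℝ F := NormedSpace.restrictScalars ℝ 𝕂 F
  obtain ⟨R, v, -, hvR, hv⟩ := exists_seq_norm_le_one_le_norm_sub (𝕜 := 𝕂) hF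
  have hadd : ∀ e1 e2 : E, BoundedContinuousFunction.const X (e1 + e2) =
    BoundedContinuousFunction.const X e1 + BoundedContinuousFunction.const X e2 := fun _ _ => rfl
  have hsm : ∀ (c : 𝕂) (e : E), BoundedContinuousFunction.const X (c • e) =
    c • BoundedContinuousFunction.const X e := fun _ _ => rfl
  refine ⟨fun y => ⟨fun e1 e2 => ?_, fun c e => ?_⟩, fun y => ?_, fun y e => ?_, fun e => ?_⟩
  · rw [hJ, hJ, hJ, hadd, map_add]; rfl
  · rw [hJ, hJ, hsm, map_smul]; rfl
  · let T' : (X →ᵇ E) →L[ℝ] (Y →ᵇ F) :=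
      AddMonoidHom.toRealLinearMap (T : (X →ᵇ E) →+ (Y →ᵇ F)) T.continuous
    have := core hX T' hbij hT hT' v R hvR hv y
    have hJe : J y = fun e => T (BoundedContinuousFunction.const X e) y := funext (hJ y)
    rw [hJe]
    exact this
  · rw [hJ]
    refine (BoundedContinuousFunction.norm_coe_le_norm _ _).trans ((T.le_opNorm _).trans ?_)
    gcongr
    exact BoundedContinuousFunction.norm_const_le e
  · simp only [hJ]
    exact (T _).continuous
end
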